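/- For any finite list of intervals (i₁,j₁), …, (i_m,j_m) with 1 ≤ i_s ≤ j_s ≤ n+2, there is an isomorphism of k-algebras End_{rep Q}(⊕_{s=1}^m M(i_s, j_s)) ≅ End_{rep Q̄}(⊕_{s=1}^m M̄(i_s, j_s)). -/

import Mathlib

open scoped Classical

noncomputable section

namespace CambrianA

/-! ### Combinatorics of a type `A_{n+2}` quiver.

Vertices are `1, …, n+2`.  For `1 ≤ i ≤ n+1`, `ε i = true` means that the arrow between
`i` and `i+1` is oriented `i → i+1` (`i` is *upper-barred*), and `ε i = false` means it is
oriented `(i+1) → i` (`i` is *lower-barred*). -/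

/-- `MaxIncr n ε i j` : the path `i → i+1 → ⋯ → j` is a maximal increasing path of `Q`. -/
def MaxIncr (n : ℕ) (ε : ℕ → Bool) (i j : ℕ) : Prop :=
  1 ≤ i ∧ i ≤ j ∧ j ≤ n + 2 ∧ (∀ ℓ, i ≤ ℓ → ℓ < j → ε ℓ = true) ∧
    (i = 1 ∨ ε (i - 1) = false) ∧ (j = n + 2 ∨ ε j = false)

/-- `MaxDecr n ε i j` : the path `i → i-1 → ⋯ → j` is a maximal decreasing path of `Q`. -/
def MaxDecr (n : ℕ) (ε : ℕ → Bool) (i j : ℕ) : Prop :=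
  1 ≤ j ∧ j ≤ i ∧ i ≤ n + 2 ∧ (∀ ℓ, j ≤ ℓ → ℓ < i → ε ℓ = false) ∧
    (i = n + 2 ∨ ε i = true) ∧ (j = 1 ∨ ε (j - 1) = true)

/-- Vertices of the polygon lying on the lower boundary: `0`, `n+2` and lower-barred ones. -/
def LowerVertex (n : ℕ) (ε : ℕ → Bool) (x : ℕ) : Prop :=
  x = 0 ∨ x = n + 2 ∨ (1 ≤ x ∧ x ≤ n + 1 ∧ ε x = false)

/-- Vertices of the polygon lying on the upper boundary: `0`, `n+2` and upper-barred ones. -/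
def UpperVertex (n : ℕ) (ε : ℕ → Bool) (x : ℕ) : Prop :=
  x = 0 ∨ x = n + 2 ∨ (1 ≤ x ∧ x ≤ n + 1 ∧ ε x = true)

/-- `(a,b)` is a lower boundary edge: `a < b` are consecutive lower vertices. -/
def LowerEdge (n : ℕ) (ε : ℕ → Bool) (a b : ℕ) : Prop :=
  LowerVertex n ε a ∧ LowerVertex n ε b ∧ a < b ∧
    ∀ c, LowerVertex n ε c → ¬(a < c ∧ c < b)

/-- `(a,b)` is an upper boundary edge: `a < b` are consecutive upper vertices. -/
def UpperEdge (n : ℕ) (ε : ℕ → Bool) (a b : ℕ) : Prop :=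
  UpperVertex n ε a ∧ UpperVertex n ε b ∧ a < b ∧
    ∀ c, UpperVertex n ε c → ¬(a < c ∧ c < b)

def BoundaryEdge (n : ℕ) (ε : ℕ → Bool) (a b : ℕ) : Prop :=
  LowerEdge n ε a b ∨ UpperEdge n ε a b

/-- `IsHook n ε a lo hi` : the hook of the arrow of `Q` between `a` and `a+1` is the
maximal path supported on the interval `[lo, hi]`.
If `ε a = true` (arrow `a → a+1`, source `a`), the hook is the maximal decreasing path
starting at `a`; if `ε a = false` (arrow `a+1 → a`, source `a+1`), the hook is the
maximal increasing path starting at `a+1`. -/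
def IsHook (n : ℕ) (ε : ℕ → Bool) (a lo hi : ℕ) : Prop :=
  if ε a = true then
    hi = a ∧ 1 ≤ lo ∧ lo ≤ a ∧ (∀ ℓ, lo ≤ ℓ → ℓ < a → ε ℓ = false) ∧
      (lo = 1 ∨ ε (lo - 1) = true)
  else
    lo = a + 1 ∧ a + 1 ≤ hi ∧ hi ≤ n + 2 ∧ (∀ ℓ, a + 1 ≤ ℓ → ℓ < hi → ε ℓ = true) ∧
      (hi = n + 2 ∨ ε hi = false)

/-- `IsCohook n ε a lo hi` : the cohook of the arrow of `Q` between `a` and `a+1` is the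
maximal path supported on the interval `[lo, hi]`, ending at the target of the arrow. -/
def IsCohook (n : ℕ) (ε : ℕ → Bool) (a lo hi : ℕ) : Prop :=
  if ε a = true then
    lo = a + 1 ∧ a + 1 ≤ hi ∧ hi ≤ n + 2 ∧ (∀ ℓ, a + 1 ≤ ℓ → ℓ < hi → ε ℓ = false) ∧
      (hi = n + 2 ∨ ε hi = true)
  else
    hi = a ∧ 1 ≤ lo ∧ lo ≤ a ∧ (∀ ℓ, lo ≤ ℓ → ℓ < a → ε ℓ = true) ∧
      (lo = 1 ∨ ε (lo - 1) = false)

/-- Counterclockwise neighbor `R⁻¹(ℓ)` of the vertex `ℓ` of the polygon `P(Q)`, for the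
cyclic order `0`, lower-barred vertices increasing, `n+2`, upper-barred vertices
decreasing. -/
def Rinv (n : ℕ) (ε : ℕ → Bool) (ℓ : ℕ) : ℕ :=
  if ℓ = n + 2 then sSup ({0} ∪ {x | 1 ≤ x ∧ x ≤ n + 1 ∧ ε x = true})
  else if 1 ≤ ℓ ∧ ℓ ≤ n + 1 ∧ ε ℓ = true then
    sSup ({0} ∪ {x | 1 ≤ x ∧ x < ℓ ∧ ε x = true})
  else
    sInf ({n + 2} ∪ {x | ℓ < x ∧ x ≤ n + 1 ∧ ε x = false})

/-- `γ(i′,j′)` is a pivot of `γ(i,j)`. -/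
def IsPivot (n : ℕ) (ε : ℕ → Bool) (i j i' j' : ℕ) : Prop :=
  (i' = Rinv n ε i ∧ j' = j ∧ Rinv n ε i < j) ∨
    (i' = i ∧ j' = Rinv n ε j ∧ i < Rinv n ε j)

/-! ### Geometry of the polygon `P(Q)`.

The plane is identified with `ℂ`; `p x` is the vertex of the polygon labeled `x`,
for `0 ≤ x ≤ n+2`. -/

/-- The hypotheses on the points `p 0, …, p (n+2)` realizing the polygon `P(Q)`:
strictly increasing `x`-coordinates; `p 0` and `p (n+2)` on a common horizontal line `L`;
upper-barred vertices above `L`, lower-barred vertices below `L`; convex position. -/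
def PolyPts (n : ℕ) (ε : ℕ → Bool) (p : ℕ → ℂ) : Prop :=
  (∀ a b, a < b → b ≤ n + 2 → (p a).re < (p b).re) ∧
    (p (n + 2)).im = (p 0).im ∧
    (∀ i, 1 ≤ i → i ≤ n + 1 →
      (ε i = true → (p 0).im < (p i).im) ∧ (ε i = false → (p i).im < (p 0).im)) ∧
    ∀ i, i ≤ n + 2 → p i ∉ convexHull ℝ (p '' {j | j ≤ n + 2 ∧ j ≠ i})

/-- The line segment `γ(e.1, e.2)` of the polygon. -/
def Seg (p : ℕ → ℂ) (e : ℕ × ℕ) : Set ℂ := segment ℝ (p e.1) (p e.2)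

/-- Two segments cross when they intersect in a point that is not a common endpoint. -/
def Cross (p : ℕ → ℂ) (e f : ℕ × ℕ) : Prop :=
  ∃ z, z ∈ Seg p e ∧ z ∈ Seg p f ∧
    ¬((z = p e.1 ∨ z = p e.2) ∧ (z = p f.1 ∨ z = p f.2))

/-- Slope of the segment `γ(e.1, e.2)`. -/
def slope (p : ℕ → ℂ) (e : ℕ × ℕ) : ℝ :=
  ((p e.2).im - (p e.1).im) / ((p e.2).re - (p e.1).re)

def ValidPair (n : ℕ) (e : ℕ × ℕ) : Prop := e.1 < e.2 ∧ e.2 ≤ n + 2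

/-- A triangulation of `P(Q)`: a maximal collection of pairwise noncrossing segments. -/
def IsTriangulation (n : ℕ) (p : ℕ → ℂ) (T : Finset (ℕ × ℕ)) : Prop :=
  (∀ e ∈ T, ValidPair n e) ∧ (∀ e ∈ T, ∀ f ∈ T, e ≠ f → ¬Cross p e f) ∧
    ∀ e, ValidPair n e → e ∉ T → ∃ f ∈ T, Cross p e f

/-- Cross product of two planar vectors; positive iff `(u, v)` is counterclockwise. -/
def cross2 (u v : ℂ) : ℝ := u.re * v.im - u.im * v.re

/-- Arrows of the adjacency quiver `Q(T)` of a triangulation `T`: `e → f` whenever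
`e` and `f` are sides of a common triangle of `T` and `f` follows `e` going
counterclockwise around that triangle. -/
def TriArrow (p : ℕ → ℂ) (T : Finset (ℕ × ℕ)) (e f : ℕ × ℕ) : Prop :=
  ∃ a b c : ℕ, a < b ∧ b < c ∧ (a, b) ∈ T ∧ (b, c) ∈ T ∧ (a, c) ∈ T ∧
    ((0 < cross2 (p b - p a) (p c - p a) ∧
        ((e = (a, b) ∧ f = (b, c)) ∨ (e = (b, c) ∧ f = (a, c)) ∨
          (e = (a, c) ∧ f = (a, b)))) ∨
      (cross2 (p b - p a) (p c - p a) < 0 ∧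
        ((e = (a, c) ∧ f = (b, c)) ∨ (e = (b, c) ∧ f = (a, b)) ∨
          (e = (a, b) ∧ f = (a, c)))))

/-! ### Representations of `Q` -/

/-- A finite dimensional representation of the quiver `Q` of type `A_{n+2}` over `k`.
The vector spaces are indexed by `ℕ`, and are required to vanish outside the set
`{1, …, n+2}` of vertices of `Q`.  For each `i`, `fwd i : V i → V (i+1)` is the structure
map of the arrow `i → i+1` (it is required to vanish when the arrow is oriented in the
other direction, i.e. `ε i = false`) and `bwd i : V (i+1) → V i` is the structure map of
the arrow `i+1 → i` (required to vanish when `ε i = true`). -/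
structure ARep (k : Type) [Field k] (n : ℕ) (ε : ℕ → Bool) where
  V : ℕ → Type
  [acg : ∀ x, AddCommGroup (V x)]
  [mod : ∀ x, Module k (V x)]
  [fdim : ∀ x, FiniteDimensional k (V x)]
  triv : ∀ x, x = 0 ∨ n + 2 < x → ∀ v : V x, v = 0
  fwd : ∀ i, V i →ₗ[k] V (i + 1)
  bwd : ∀ i, V (i + 1) →ₗ[k] V i
  fwd_zero : ∀ i, ε i = false → fwd i = 0
  bwd_zero : ∀ i, ε i = true → bwd i = 0

attribute [instance] ARep.acg ARep.mod ARep.fdim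

variable {k : Type} [Field k] {n : ℕ} {ε : ℕ → Bool}

/-- Morphisms of representations. -/
@[ext]
structure ARep.Hom (M N : ARep k n ε) where
  app : ∀ x, M.V x →ₗ[k] N.V x
  comm_fwd : ∀ i (v : M.V i), app (i + 1) (M.fwd i v) = N.fwd i (app i v)
  comm_bwd : ∀ i (v : M.V (i + 1)), app i (M.bwd i v) = N.bwd i (app (i + 1) v)

/-- The identity morphism. -/
def ARep.Hom.id (M : ARep k n ε) : M.Hom M :=
  ⟨fun _ => LinearMap.id, fun _ _ => rfl, fun _ _ => rfl⟩

/-- Composition of morphisms. -/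
def ARep.Hom.comp {M N P : ARep k n ε} (g : N.Hom P) (f : M.Hom N) : M.Hom P where
  app x := (g.app x).comp (f.app x)
  comm_fwd i v := by simp only [LinearMap.comp_apply, f.comm_fwd, g.comm_fwd]
  comm_bwd i v := by simp only [LinearMap.comp_apply, f.comm_bwd, g.comm_bwd]

/-- Sum of two morphisms. -/
def ARep.Hom.add {M N : ARep k n ε} (f g : M.Hom N) : M.Hom N where
  app x := f.app x + g.app x
  comm_fwd i v := by
    simp only [LinearMap.add_apply, f.comm_fwd, g.comm_fwd, map_add]
  comm_bwd i v := by
    simp only [LinearMap.add_apply, f.comm_bwd, g.comm_bwd, map_add]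

/-- Scalar multiple of a morphism. -/
def ARep.Hom.smul {M N : ARep k n ε} (c : k) (f : M.Hom N) : M.Hom N where
  app x := c • f.app x
  comm_fwd i v := by simp only [LinearMap.smul_apply, f.comm_fwd, map_smul]
  comm_bwd i v := by simp only [LinearMap.smul_apply, f.comm_bwd, map_smul]

/-- Isomorphism of representations. -/
def ARep.Iso (M N : ARep k n ε) : Prop :=
  ∃ f : M.Hom N, ∀ x, Function.Bijective (f.app x)

/-- The zero representation(s). -/
def ARep.IsZero (M : ARep k n ε) : Prop := ∀ x, ∀ v : M.V x, v = 0

/-- The support of a representation. -/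
def ARep.supp (M : ARep k n ε) : Set ℕ := {x | ∃ v : M.V x, v ≠ 0}

/-- Direct sum of two representations. -/
def ARep.dsum (M N : ARep k n ε) : ARep k n ε where
  V x := M.V x × N.V x
  acg _ := by infer_instance
  mod _ := by infer_instance
  fdim _ := by infer_instance
  triv x hx v := by
    have h1 := M.triv x hx v.1
    have h2 := N.triv x hx v.2
    exact Prod.ext h1 h2
  fwd i := (M.fwd i).prodMap (N.fwd i)
  bwd i := (M.bwd i).prodMap (N.bwd i)
  fwd_zero i h := by
    show (M.fwd i).prodMap (N.fwd i) = 0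
    rw [M.fwd_zero i h, N.fwd_zero i h]
    apply LinearMap.ext; rintro ⟨a, b⟩; simp
  bwd_zero i h := by
    show (M.bwd i).prodMap (N.bwd i) = 0
    rw [M.bwd_zero i h, N.bwd_zero i h]
    apply LinearMap.ext; rintro ⟨a, b⟩; simp

/-- One dimensional space `k` if `P` holds, `0` otherwise (as a submodule of `k`). -/
def fiber (k : Type) [Field k] (P : Prop) : Submodule k k := if P then ⊤ else ⊥

/-- The canonical map `fiber k P → fiber k Q` : "identity" if `P ∧ Q`, zero otherwise. -/
def fiberMap (k : Type) [Field k] (P Q : Prop) : fiber k P →ₗ[k] fiber k Q :=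
  if h : P ∧ Q then
    { toFun := fun v => ⟨(v : k), by
        rw [show fiber k Q = ⊤ from if_pos h.2]; exact Submodule.mem_top⟩
      map_add' := fun _ _ => rfl
      map_smul' := fun _ _ => rfl }
  else 0

/-- The zero representation. -/
def zeroRep (k : Type) [Field k] (n : ℕ) (ε : ℕ → Bool) : ARep k n ε where
  V _ := ↥(fiber k False)
  acg _ := by infer_instance
  mod _ := by infer_instance
  fdim _ := by infer_instance
  triv x _ v := by
    have hfib : fiber k False = ⊥ := if_neg (fun h : False => h.elim)
    obtain ⟨w, hw⟩ := v
    apply Subtype.ext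
    have hb : w ∈ (⊥ : Submodule k k) := hfib ▸ hw
    exact (Submodule.mem_bot k).mp hb
  fwd _ := 0
  bwd _ := 0
  fwd_zero _ _ := rfl
  bwd_zero _ _ := rfl

/-- The condition for a vertex `x` to be in the support of the interval representation
`M(i,j)`. -/
def SuppCond (n i j x : ℕ) : Prop := i ≤ x ∧ x ≤ j ∧ 1 ≤ x ∧ x ≤ n + 2

/-- The interval (string) representation `M(i,j)` of `Q`: one dimensional at each vertex
`x` with `i ≤ x ≤ j`, zero elsewhere, with identity maps on all arrows whose endpoints
both lie in `[i,j]`. -/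
def intervalRep (k : Type) [Field k] (n : ℕ) (ε : ℕ → Bool) (i j : ℕ) : ARep k n ε where
  V x := ↥(fiber k (SuppCond n i j x))
  acg _ := by infer_instance
  mod _ := by infer_instance
  fdim _ := by infer_instance
  triv x hx v := by
    have hP : ¬SuppCond n i j x := by simp only [SuppCond]; omega
    have hfib : fiber k (SuppCond n i j x) = ⊥ := if_neg hP
    obtain ⟨w, hw⟩ := v
    apply Subtype.ext
    have hb : w ∈ (⊥ : Submodule k k) := hfib ▸ hw
    exact (Submodule.mem_bot k).mp hb
  fwd ℓ :=
    if ε ℓ = true then fiberMap k (SuppCond n i j ℓ) (SuppCond n i j (ℓ + 1)) else 0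
  bwd ℓ :=
    if ε ℓ = true then 0 else fiberMap k (SuppCond n i j (ℓ + 1)) (SuppCond n i j ℓ)
  fwd_zero ℓ h := by simp [h]
  bwd_zero ℓ h := by simp [h]

/-- Direct sum of a list of representations. -/
def dsumList (k : Type) [Field k] (n : ℕ) (ε : ℕ → Bool) :
    List (ARep k n ε) → ARep k n ε
  | [] => zeroRep k n ε
  | M :: L => M.dsum (dsumList k n ε L)

/-- Indecomposable representations. -/
def ARep.Indec (M : ARep k n ε) : Prop :=
  ¬M.IsZero ∧ ∀ A B : ARep k n ε, M.Iso (A.dsum B) → A.IsZero ∨ B.IsZero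

/-- `A` is a direct summand of `T`. -/
def ARep.IsSummand (A T : ARep k n ε) : Prop := ∃ B : ARep k n ε, T.Iso (A.dsum B)

/-- A representation is basic when it has no repeated indecomposable direct summand. -/
def ARep.Basic (T : ARep k n ε) : Prop :=
  ∀ A : ARep k n ε, A.Indec → ¬(A.dsum A).IsSummand T

/-- A short exact sequence `0 → B → E → A → 0`. -/
structure SES (B A : ARep k n ε) where
  E : ARep k n ε
  ι : B.Hom E
  π : E.Hom A
  inj : ∀ x, Function.Injective (ι.app x)
  surj : ∀ x, Function.Surjective (π.app x)
  exct : ∀ x (v : E.V x), π.app x v = 0 ↔ ∃ u, ι.app x u = v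

/-- A short exact sequence splits. -/
def SES.Splits {B A : ARep k n ε} (σ : SES B A) : Prop :=
  ∃ r : σ.E.Hom B, ∀ x (v : B.V x), r.app x (σ.ι.app x v) = v

/-- `Ext¹(A, B) = 0` : every short exact sequence `0 → B → E → A → 0` splits. -/
def ExtZero (A B : ARep k n ε) : Prop := ∀ σ : SES B A, σ.Splits

/-- `Ext¹(A,B) ≅ k`, generated by (the class of) a short exact sequence
`0 → B → E → A → 0` with indecomposable middle term `E`: there is a non-split such
sequence `σ` with `σ.E` indecomposable such that every non-split sequence is equivalent
to a nonzero scalar multiple of `σ`. -/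
def ExtOneDimIndecMid (A B : ARep k n ε) : Prop :=
  ∃ σ : SES B A, ¬σ.Splits ∧ σ.E.Indec ∧
    ∀ τ : SES B A, ¬τ.Splits → ∃ c : k, c ≠ 0 ∧
      ∃ φ : σ.E.Hom τ.E, (∀ x, Function.Bijective (φ.app x)) ∧
        (∀ x (v : B.V x), φ.app x (σ.ι.app x v) = τ.ι.app x v) ∧
        (∀ x (v : σ.E.V x), τ.π.app x (φ.app x v) = c • σ.π.app x v)

/-- Almost rigid representations. -/
def AlmostRigid (T : ARep k n ε) : Prop :=
  T.Basic ∧ ∀ A B : ARep k n ε, A.Indec → B.Indec → A.IsSummand T → B.IsSummand T →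
    ExtZero A B ∨ ExtOneDimIndecMid A B

/-- Maximal almost rigid representations. -/
def MaxAlmostRigid (T : ARep k n ε) : Prop :=
  AlmostRigid T ∧ ∀ M : ARep k n ε, ¬M.IsZero → ¬AlmostRigid (T.dsum M)

/-- `f` is a section. -/
def ARep.Hom.IsSection {M N : ARep k n ε} (f : M.Hom N) : Prop :=
  ∃ g : N.Hom M, ∀ x (v : M.V x), g.app x (f.app x v) = v

/-- `f` is a retraction. -/
def ARep.Hom.IsRetraction {M N : ARep k n ε} (f : M.Hom N) : Prop :=
  ∃ g : N.Hom M, ∀ x (v : N.V x), f.app x (g.app x v) = v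

/-- Irreducible morphisms: `f` is neither a section nor a retraction, and in every
factorization `f = g ∘ h` either `h` is a section or `g` is a retraction. -/
def ARep.Hom.Irred {M N : ARep k n ε} (f : M.Hom N) : Prop :=
  ¬f.IsSection ∧ ¬f.IsRetraction ∧
    ∀ (Z : ARep k n ε) (h : M.Hom Z) (g : Z.Hom N),
      (∀ x (v : M.V x), f.app x v = g.app x (h.app x v)) → h.IsSection ∨ g.IsRetraction

/-- Subrepresentations : families of subspaces closed under the structure maps. -/
structure Subrep (M : ARep k n ε) where
  U : ∀ x, Submodule k (M.V x)
  fwd_mem : ∀ i, ∀ v ∈ U i, M.fwd i v ∈ U (i + 1)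
  bwd_mem : ∀ i, ∀ v ∈ U (i + 1), M.bwd i v ∈ U i

/-- The central charge `Z(M) = Σ_{x=1}^{n+2} dim_k(M_x) · (p_x − p_{x−1})`. -/
def charge (p : ℕ → ℂ) (M : ARep k n ε) : ℂ :=
  ∑ x ∈ Finset.Icc 1 (n + 2), (Module.finrank k (M.V x) : ℂ) * (p x - p (x - 1))

/-- The central charge of a subrepresentation. -/
def subCharge (p : ℕ → ℂ) {M : ARep k n ε} (L : Subrep M) : ℂ :=
  ∑ x ∈ Finset.Icc 1 (n + 2), (Module.finrank k (L.U x) : ℂ) * (p x - p (x - 1))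

/-- The representation `F(T) = ⊕_{γ(a,b) ∈ T} M(a+1, b)` attached to a collection `T` of
segments of the polygon `P(Q)`. -/
def FRep (k : Type) [Field k] (n : ℕ) (ε : ℕ → Bool) (T : Finset (ℕ × ℕ)) : ARep k n ε :=
  dsumList k n ε (T.toList.map fun e => intervalRep k n ε (e.1 + 1) e.2)

end CambrianA

namespace CambrianA

/-- The orientation of the subdivided quiver `Q̄` of type `A_{2n+3}` : the vertex `v` of
`Q̄` (a half-integer `1, 3/2, …, n+2`) corrresponds to the index `2v−1 ∈ {1, …, 2n+3}`,
and both halves of the original arrow `i ↔ i+1` inherit its orientation. -/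
def barε (ε : ℕ → Bool) : ℕ → Bool := fun a => ε ((a + 1) / 2)

/-- The direct sum `⊕ₛ M(iₛ, jₛ)` of interval representations of `Q`. -/
def TQ (k : Type) [Field k] (n : ℕ) (ε : ℕ → Bool) (L : List (ℕ × ℕ)) : ARep k n ε :=
  dsumList k n ε (L.map fun q => intervalRep k n ε q.1 q.2)

/-- The direct sum `⊕ₛ M̄(iₛ, jₛ)` of the corresponding interval representations of the
subdivided quiver `Q̄` (of type `A_{2n+3}`, with vertex `v ∈ (1/2)ℤ` encoded as `2v−1`). -/
def TQbar (k : Type) [Field k] (n : ℕ) (ε : ℕ → Bool) (L : List (ℕ × ℕ)) :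
    ARep k (2 * n + 1) (barε ε) :=
  dsumList k (2 * n + 1) (barε ε)
    (L.map fun q => intervalRep k (2 * n + 1) (barε ε) (2 * q.1 - 1) (2 * q.2 - 1))

section Helpers

variable {k : Type} [Field k] {n m : ℕ} {ε δ : ℕ → Bool}

/-- `N` is (isomorphic to) the subdivision of `M`: at the old vertices the spaces agree, and
at a new vertex the space is the image of the structure map of the subdivided arrow. -/
structure SubDiv (M : ARep k n ε) (N : ARep k m δ) where
  φ : ∀ j : ℕ, M.V (j + 1) ≃ₗ[k] N.V (2 * j + 1)
  fcomp : ∀ (j : ℕ) (v : M.V (j + 1)),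
    φ (j + 1) (M.fwd (j + 1) v) = N.fwd (2 * j + 1 + 1) (N.fwd (2 * j + 1) (φ j v))
  bcomp : ∀ (j : ℕ) (v : M.V (j + 1 + 1)),
    φ j (M.bwd (j + 1) v) = N.bwd (2 * j + 1) (N.bwd (2 * j + 1 + 1) (φ (j + 1) v))
  fs : ∀ j : ℕ, ε (j + 1) = true → Function.Surjective (N.fwd (2 * j + 1))
  fi : ∀ j : ℕ, ε (j + 1) = true → Function.Injective (N.fwd (2 * j + 1 + 1))
  bs : ∀ j : ℕ, ε (j + 1) = false → Function.Surjective (N.bwd (2 * j + 1 + 1))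
  bi : ∀ j : ℕ, ε (j + 1) = false → Function.Injective (N.bwd (2 * j + 1))

theorem mid_exists {V W U : Type} [AddCommGroup V] [Module k V] [AddCommGroup W] [Module k W]
    [AddCommGroup U] [Module k U] (p : V →ₗ[k] W) (q : W →ₗ[k] U)
    (hp : Function.Surjective p) (hq : Function.Injective q) (A : V →ₗ[k] V) (B : U →ₗ[k] U)
    (h : ∀ v, B (q (p v)) = q (p (A v))) :
    ∃ g : W →ₗ[k] W, (∀ v, g (p v) = p (A v)) ∧ ∀ w, B (q w) = q (g w) := by
  obtain ⟨s, hs⟩ := p.exists_rightInverse_of_surjective (LinearMap.range_eq_top.2 hp)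
  have hs' : ∀ w, p (s w) = w := fun w => LinearMap.congr_fun hs w
  have key : ∀ v, (p ∘ₗ A ∘ₗ s) (p v) = p (A v) := by
    intro v
    apply hq
    simp only [LinearMap.comp_apply]
    rw [← h, ← h, hs']
  refine ⟨p ∘ₗ A ∘ₗ s, key, fun w => ?_⟩
  obtain ⟨v, rfl⟩ := hp w
  rw [key, h]

/-- Restriction of an endomorphism of the subdivision, on spaces. -/
def SubDiv.resApp {M : ARep k n ε} {N : ARep k m δ} (S : SubDiv M N) (f : N.Hom N) :
    ∀ x, M.V x →ₗ[k] M.V x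
  | 0 => 0
  | j + 1 => (S.φ j).symm.toLinearMap ∘ₗ f.app (2 * j + 1) ∘ₗ (S.φ j).toLinearMap

theorem SubDiv.φ_resApp {M : ARep k n ε} {N : ARep k m δ} (S : SubDiv M N) (f : N.Hom N)
    (j : ℕ) (v : M.V (j + 1)) :
    S.φ j (S.resApp f (j + 1) v) = f.app (2 * j + 1) (S.φ j v) := by
  simp [SubDiv.resApp]

/-- Restriction of an endomorphism of the subdivision. -/
def SubDiv.res {M : ARep k n ε} {N : ARep k m δ} (S : SubDiv M N) (f : N.Hom N) :
    M.Hom M where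
  app := S.resApp f
  comm_fwd i v := by
    cases i with
    | zero =>
      rw [M.triv 0 (Or.inl rfl) v]
      simp
    | succ j =>
      apply (S.φ (j + 1)).injective
      rw [S.φ_resApp, S.fcomp, S.fcomp, S.φ_resApp]
      erw [f.comm_fwd (2 * j + 1 + 1), f.comm_fwd (2 * j + 1)]
  comm_bwd i v := by
    cases i with
    | zero => exact (M.triv 0 (Or.inl rfl) _).trans (M.triv 0 (Or.inl rfl) _).symm
    | succ j =>
      apply (S.φ j).injective
      rw [S.φ_resApp, S.bcomp, S.bcomp, S.φ_resApp]
      erw [f.comm_bwd (2 * j + 1), f.comm_bwd (2 * j + 1 + 1)]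
      rfl

theorem SubDiv.φ_res {M : ARep k n ε} {N : ARep k m δ} (S : SubDiv M N) (f : N.Hom N)
    (j : ℕ) (v : M.V (j + 1)) :
    S.φ j ((S.res f).app (j + 1) v) = f.app (2 * j + 1) (S.φ j v) := S.φ_resApp f j v

theorem SubDiv.hom_ext {M : ARep k n ε} {N : ARep k m δ} (S : SubDiv M N) {f g : M.Hom M}
    (h : ∀ j v, S.φ j (f.app (j + 1) v) = S.φ j (g.app (j + 1) v)) : f = g := by
  apply ARep.Hom.ext
  funext x
  apply LinearMap.ext
  intro v
  cases x with
  | zero => exact (M.triv 0 (Or.inl rfl) _).trans (M.triv 0 (Or.inl rfl) _).symm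
  | succ j => exact (S.φ j).injective (h j v)

theorem vert_cases (x : ℕ) : x = 0 ∨ (∃ j, x = 2 * j + 1) ∨ ∃ j, x = 2 * j + 1 + 1 := by
  rcases Nat.even_or_odd' x with ⟨c, h | h⟩
  · cases c with
    | zero => left; omega
    | succ c => right; right; exact ⟨c, by omega⟩
  · right; left; exact ⟨c, h⟩

theorem SubDiv.res_injective {M : ARep k n ε} {N : ARep k m δ} (S : SubDiv M N) :
    Function.Injective S.res := by
  intro f g hfg
  have hodd : ∀ j (v : N.V (2 * j + 1)), f.app (2 * j + 1) v = g.app (2 * j + 1) v := by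
    intro j v
    obtain ⟨w, rfl⟩ := (S.φ j).surjective v
    rw [← S.φ_res, ← S.φ_res, hfg]
  apply ARep.Hom.ext
  funext x
  apply LinearMap.ext
  intro v
  rcases vert_cases x with rfl | ⟨j, rfl⟩ | ⟨j, rfl⟩
  · exact (N.triv 0 (Or.inl rfl) _).trans (N.triv 0 (Or.inl rfl) _).symm
  · exact hodd j v
  · cases hε : ε (j + 1) with
    | true =>
      obtain ⟨w, rfl⟩ := S.fs j hε v
      rw [f.comm_fwd, g.comm_fwd, hodd]
    | false =>
      obtain ⟨w, rfl⟩ := S.bs j hε v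
      rw [f.comm_bwd, g.comm_bwd]
      congr 1
      exact hodd (j + 1) w

theorem SubDiv.mid {M : ARep k n ε} {N : ARep k m δ} (S : SubDiv M N)
    (hδ : ∀ j, δ (2 * j + 1) = ε (j + 1)) (hδ' : ∀ j, δ (2 * j + 1 + 1) = ε (j + 1))
    (j : ℕ) (A : N.V (2 * j + 1) →ₗ[k] N.V (2 * j + 1))
    (B : N.V (2 * j + 1 + 1 + 1) →ₗ[k] N.V (2 * j + 1 + 1 + 1))
    (hf : ∀ v, B (N.fwd _ (N.fwd _ v)) = N.fwd _ (N.fwd _ (A v)))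
    (hb : ∀ v, A (N.bwd _ (N.bwd _ v)) = N.bwd _ (N.bwd _ (B v))) :
    ∃ g : N.V (2 * j + 1 + 1) →ₗ[k] N.V (2 * j + 1 + 1),
      (∀ v, g (N.fwd _ v) = N.fwd _ (A v)) ∧ (∀ v, B (N.fwd _ v) = N.fwd _ (g v)) ∧
      (∀ v, A (N.bwd _ v) = N.bwd _ (g v)) ∧ (∀ v, g (N.bwd _ v) = N.bwd _ (B v)) := by
  cases hε : ε (j + 1) with
  | true =>
    obtain ⟨g, h1, h2⟩ := mid_exists _ _ (S.fs j hε) (S.fi j hε) A B hf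
    refine ⟨g, h1, h2, ?_, ?_⟩
    · rw [N.bwd_zero _ ((hδ j).trans hε)]; simp
    · rw [N.bwd_zero _ ((hδ' j).trans hε)]; simp
  | false =>
    obtain ⟨g, h1, h2⟩ := mid_exists _ _ (S.bs j hε) (S.bi j hε) B A hb
    refine ⟨g, ?_, ?_, h2, h1⟩
    · rw [N.fwd_zero _ ((hδ j).trans hε)]; simp
    · rw [N.fwd_zero _ ((hδ' j).trans hε)]; simp

theorem SubDiv.res_surjective {M : ARep k n ε} {N : ARep k m δ} (S : SubDiv M N)
    (hδ : ∀ j, δ (2 * j + 1) = ε (j + 1)) (hδ' : ∀ j, δ (2 * j + 1 + 1) = ε (j + 1)) :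
    Function.Surjective S.res := by
  intro f
  let A : ∀ j, N.V (2 * j + 1) →ₗ[k] N.V (2 * j + 1) := fun j =>
    (S.φ j).toLinearMap ∘ₗ f.app (j + 1) ∘ₗ (S.φ j).symm.toLinearMap
  have hA : ∀ j v, A j (S.φ j v) = S.φ j (f.app (j + 1) v) := by
    intro j v; simp [A]
  have hmid : ∀ j, ∃ g : N.V (2 * j + 1 + 1) →ₗ[k] N.V (2 * j + 1 + 1),
      (∀ v, g (N.fwd _ v) = N.fwd _ (A j v)) ∧ (∀ v, A (j + 1) (N.fwd _ v) = N.fwd _ (g v)) ∧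
      (∀ v, A j (N.bwd _ v) = N.bwd _ (g v)) ∧
      (∀ v, g (N.bwd _ v) = N.bwd _ (A (j + 1) v)) := by
    intro j
    refine S.mid hδ hδ' j (A j) (A (j + 1)) ?_ ?_
    · intro v
      obtain ⟨w, rfl⟩ := (S.φ j).surjective v
      rw [hA, ← S.fcomp, hA, f.comm_fwd, S.fcomp]
    · intro v
      obtain ⟨w, rfl⟩ := (S.φ (j + 1)).surjective v
      have h1 := hA (j + 1) w
      have h2 := S.bcomp j w
      have h3 := S.bcomp j (f.app (j + 1 + 1) w)
      erw [← h2, hA, f.comm_bwd, h3, h1]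
  choose G hG1 hG2 hG3 hG4 using hmid
  have hex : ∀ x, ∃ g : N.V x →ₗ[k] N.V x, (∀ j (h : 2 * j + 1 = x), g = h ▸ A j) ∧
      (∀ j (h : 2 * j + 1 + 1 = x), g = h ▸ G j) := by
    intro x
    rcases vert_cases x with rfl | ⟨j, rfl⟩ | ⟨j, rfl⟩
    · exact ⟨0, fun j h => by omega, fun j h => by omega⟩
    · refine ⟨A j, fun i h => ?_, fun i h => by omega⟩
      obtain rfl : i = j := by omega
      rfl
    · refine ⟨G j, fun i h => by omega, fun i h => ?_⟩
      obtain rfl : i = j := by omega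
      rfl
  choose H HA HG using hex
  have hHA : ∀ j, H (2 * j + 1) = A j := fun j => HA _ j rfl
  have hHA' : ∀ j, H (2 * j + 1 + 1 + 1) = A (j + 1) := fun j => HA _ (j + 1) rfl
  have hHG : ∀ j, H (2 * j + 1 + 1) = G j := fun j => HG _ j rfl
  refine ⟨⟨H, ?_, ?_⟩, ?_⟩
  · intro i v
    rcases vert_cases i with rfl | ⟨j, rfl⟩ | ⟨j, rfl⟩
    · rw [N.triv 0 (Or.inl rfl) v]; simp
    · rw [hHA, hHG]; exact hG1 j v
    · rw [hHA', hHG]; exact hG2 j v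
  · intro i v
    rcases vert_cases i with rfl | ⟨j, rfl⟩ | ⟨j, rfl⟩
    · exact (N.triv 0 (Or.inl rfl) _).trans (N.triv 0 (Or.inl rfl) _).symm
    · rw [hHA, hHG]; exact hG3 j v
    · rw [hHA', hHG]; exact hG4 j v
  · apply S.hom_ext
    intro j v
    rw [S.φ_res]
    change H (2 * j + 1) _ = _
    rw [hHA, hA]

theorem SubDiv.main {M : ARep k n ε} {N : ARep k m δ} (S : SubDiv M N)
    (hδ : ∀ j, δ (2 * j + 1) = ε (j + 1)) (hδ' : ∀ j, δ (2 * j + 1 + 1) = ε (j + 1)) :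
    ∃ e : (M.Hom M) ≃ (N.Hom N),
      (∀ f g, e (f.add g) = (e f).add (e g)) ∧
      (∀ (c : k) f, e (ARep.Hom.smul c f) = ARep.Hom.smul c (e f)) ∧
      (∀ f g, e (f.comp g) = (e f).comp (e g)) ∧
      e (ARep.Hom.id M) = ARep.Hom.id N := by
  let r : (N.Hom N) ≃ (M.Hom M) :=
    Equiv.ofBijective S.res ⟨S.res_injective, S.res_surjective hδ hδ'⟩
  have hr : ∀ f, S.res (r.symm f) = f := fun f => r.apply_symm_apply f
  refine ⟨r.symm, ?_, ?_, ?_, ?_⟩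
  · intro f g
    apply S.res_injective
    rw [hr]
    apply S.hom_ext
    intro j v
    rw [S.φ_res]
    simp only [ARep.Hom.add, LinearMap.add_apply, map_add]
    rw [← S.φ_res, ← S.φ_res, hr, hr]
  · intro c f
    apply S.res_injective
    rw [hr]
    apply S.hom_ext
    intro j v
    rw [S.φ_res]
    simp only [ARep.Hom.smul, LinearMap.smul_apply, map_smul]
    rw [← S.φ_res, hr]
  · intro f g
    apply S.res_injective
    rw [hr]
    apply S.hom_ext
    intro j v
    rw [S.φ_res]
    simp only [ARep.Hom.comp, LinearMap.comp_apply]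
    rw [← S.φ_res, ← S.φ_res, hr, hr]
  · apply S.res_injective
    rw [hr]
    apply S.hom_ext
    intro j v
    rw [S.φ_res]
    rfl

/-- Subdivisions are compatible with direct sums. -/
def SubDiv.dsum {M M' : ARep k n ε} {N N' : ARep k m δ} (S : SubDiv M N) (S' : SubDiv M' N') :
    SubDiv (M.dsum M') (N.dsum N') where
  φ j := (S.φ j).prodCongr (S'.φ j)
  fcomp j v := Prod.ext (S.fcomp j v.1) (S'.fcomp j v.2)
  bcomp j v := Prod.ext (S.bcomp j v.1) (S'.bcomp j v.2)
  fs j h := Function.Surjective.prodMap (S.fs j h) (S'.fs j h)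
  fi j h := Function.Injective.prodMap (S.fi j h) (S'.fi j h)
  bs j h := Function.Surjective.prodMap (S.bs j h) (S'.bs j h)
  bi j h := Function.Injective.prodMap (S.bi j h) (S'.bi j h)

theorem fiber_eq_zero {P : Prop} (h : ¬P) (v : fiber k P) : v = 0 := by
  obtain ⟨w, hw⟩ := v
  apply Subtype.ext
  rw [show fiber k P = ⊥ from if_neg h] at hw
  exact (Submodule.mem_bot k).mp hw

theorem fiberMap_coe {P Q : Prop} (hP : P) (hQ : Q) (v : fiber k P) :
    (fiberMap k P Q v : k) = v := by
  have h : P ∧ Q := ⟨hP, hQ⟩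
  simp only [fiberMap, dif_pos h]
  rfl

theorem fiberMap_surj {P Q : Prop} (h : Q → P) : Function.Surjective (fiberMap k P Q) := by
  intro w
  by_cases hQ : Q
  · refine ⟨⟨w, ?_⟩, ?_⟩
    · rw [show fiber k P = ⊤ from if_pos (h hQ)]; exact Submodule.mem_top
    · apply Subtype.ext; rw [fiberMap_coe (h hQ) hQ]
  · exact ⟨0, (fiber_eq_zero hQ _).trans (fiber_eq_zero hQ _).symm⟩

theorem fiberMap_inj {P Q : Prop} (h : P → Q) : Function.Injective (fiberMap k P Q) := by
  intro v w hvw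
  by_cases hP : P
  · apply Subtype.ext
    rw [← fiberMap_coe hP (h hP) v, ← fiberMap_coe hP (h hP) w, hvw]
  · exact (fiber_eq_zero hP _).trans (fiber_eq_zero hP _).symm

/-- Fibers over equivalent propositions. -/
def fiberEquiv {P Q : Prop} (h : P ↔ Q) : fiber k P ≃ₗ[k] fiber k Q :=
  LinearEquiv.ofEq _ _ (by rw [propext h])

theorem fiberEquiv_coe {P Q : Prop} (h : P ↔ Q) (v : fiber k P) :
    (fiberEquiv h v : k) = v := rfl

theorem fiber_square {P Q P' R Q' : Prop} (hP : P ↔ P') (hQ : Q ↔ Q') (hR : R ↔ P ∧ Q)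
    (v : fiber k P) :
    fiberEquiv hQ (fiberMap k P Q v) =
      fiberMap k R Q' (fiberMap k P' R (fiberEquiv hP v)) := by
  by_cases h : P ∧ Q
  · have h2 := hR.2 h
    apply Subtype.ext
    rw [fiberEquiv_coe, fiberMap_coe h.1 h.2, fiberMap_coe h2 (hQ.1 h.2),
      fiberMap_coe (hP.1 h.1) h2, fiberEquiv_coe]
  · rw [fiber_eq_zero (fun x => h (hR.1 x)) (fiberMap k P' R (fiberEquiv hP v)), map_zero]
    have : fiberMap k P Q = 0 := by simp [fiberMap, h]
    rw [this]
    simp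

theorem barε_odd (ε : ℕ → Bool) (j : ℕ) : barε ε (2 * j + 1) = ε (j + 1) := by
  unfold barε; congr 1; omega

theorem barε_even (ε : ℕ → Bool) (j : ℕ) : barε ε (2 * j + 1 + 1) = ε (j + 1) := by
  unfold barε; congr 1; omega

/-- Interval representations. -/
def subDivInterval (k : Type) [Field k] (n : ℕ) (ε : ℕ → Bool) (a b : ℕ) (ha : 1 ≤ a) :
    SubDiv (intervalRep k n ε a b)
      (intervalRep k (2 * n + 1) (barε ε) (2 * a - 1) (2 * b - 1)) where
  φ j := fiberEquiv (by simp only [SuppCond]; omega)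
  fcomp j v := by
    simp only [intervalRep, barε_odd, barε_even]
    cases hε : ε (j + 1) with
    | true =>
      exact fiber_square _ _ (by simp only [SuppCond]; omega) v
    | false => exact map_zero (fiberEquiv _)
  bcomp j v := by
    simp only [intervalRep, barε_odd, barε_even]
    cases hε : ε (j + 1) with
    | true => exact map_zero (fiberEquiv _)
    | false =>
      exact fiber_square _ _ (by simp only [SuppCond]; omega) v
  fs j h := by
    simp only [intervalRep, barε_odd, h, if_true]
    exact fiberMap_surj (by simp only [SuppCond]; omega)
  fi j h := by
    simp only [intervalRep, barε_even, h, if_true]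
    exact fiberMap_inj (by simp only [SuppCond]; omega)
  bs j h := by
    simp only [intervalRep, barε_even, h]
    exact fiberMap_surj (by simp only [SuppCond]; omega)
  bi j h := by
    simp only [intervalRep, barε_odd, h]
    exact fiberMap_inj (by simp only [SuppCond]; omega)

/-- The zero representation. -/
def subDivZero (k : Type) [Field k] (n m : ℕ) (ε δ : ℕ → Bool) :
    SubDiv (zeroRep k n ε) (zeroRep k m δ) where
  φ j := LinearEquiv.refl k _
  fcomp j v := rfl
  bcomp j v := rfl
  fs j h := fun w => ⟨0, (fiber_eq_zero id _).trans (fiber_eq_zero id _).symm⟩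
  fi j h := fun v w _ => (fiber_eq_zero id _).trans (fiber_eq_zero id _).symm
  bs j h := fun w => ⟨0, (fiber_eq_zero id _).trans (fiber_eq_zero id _).symm⟩
  bi j h := fun v w _ => (fiber_eq_zero id _).trans (fiber_eq_zero id _).symm

theorem subDivList (k : Type) [Field k] (n : ℕ) (ε : ℕ → Bool) (L : List (ℕ × ℕ))
    (hL : ∀ e ∈ L, 1 ≤ e.1) : Nonempty (SubDiv (TQ k n ε L) (TQbar k n ε L)) := by
  induction L with
  | nil => exact ⟨subDivZero k n _ ε _⟩
  | cons q L ih =>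
    obtain ⟨S⟩ := ih (fun e he => hL e (List.mem_cons_of_mem _ he))
    exact ⟨(subDivInterval k n ε q.1 q.2 (hL q List.mem_cons_self)).dsum S⟩

end Helpers

/-- `End_{rep Q}(⊕ M(iₛ,jₛ)) ≅ End_{rep Q̄}(⊕ M̄(iₛ,jₛ))` as `k`-algebras:
there is a bijection between the endomorphism spaces preserving addition, scalar
multiplication, composition and the identity. -/
theorem stmt_18 (k : Type) [Field k] (n : ℕ) (ε : ℕ → Bool) (L : List (ℕ × ℕ))
    (hL : ∀ e ∈ L, 1 ≤ e.1 ∧ e.1 ≤ e.2 ∧ e.2 ≤ n + 2) :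
    ∃ e : ((TQ k n ε L).Hom (TQ k n ε L)) ≃ ((TQbar k n ε L).Hom (TQbar k n ε L)),
      (∀ f g, e (f.add g) = (e f).add (e g)) ∧
      (∀ (c : k) f, e (ARep.Hom.smul c f) = ARep.Hom.smul c (e f)) ∧
      (∀ f g, e (f.comp g) = (e f).comp (e g)) ∧
      e (ARep.Hom.id (TQ k n ε L)) = ARep.Hom.id (TQbar k n ε L) := by
  obtain ⟨S⟩ := subDivList k n ε L (fun e he => (hL e he).1)
  exact S.main (barε_odd ε) (barε_even ε)

end CambrianA
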